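/- arXiv:2510.20945 — 6 statements merged into one kernel-verified Lean document; each statement's English description precedes it below -/
import Mathlib

section
/- Let E be a finite-dimensional real inner product space, ω a nondegenerate alternating bilinear form on E, and B : E → E the linear map determined by ⟪ξ, η⟫ = ω(ξ, B η) for all ξ, η ∈ E. Let S : E → E be a self-adjoint positive definite linear map with S∘S = −(B∘B) and S∘B = B∘S, and let J : E → E be the linear map with S∘J = B (i.e. J = S⁻¹∘B). Then: (a) J∘J = −id; (b) the bilinear form g(ξ,η) := ω(ξ, J η) is symmetric; (c) g(ξ,ξ) = ⟪ξ, S⁻¹ ξ⟫ > 0 for every ξ ≠ 0. In other words, J is a complex structure on E compatible with ω. -/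
/-!
Positivity makes `S` injective and `S` commutes with `B`, so cancelling `S` gives
`J = S⁻¹ B = B S⁻¹`. Hence `S² J² = B² = -S²`, so `J² = -1`, and
`ω(ξ, J η) = ω(ξ, B S⁻¹ η) = ⟪ξ, S⁻¹ η⟫`. The form `ω(·, J ·)` is therefore symmetric and
positive definite because `S⁻¹` inherits self-adjointness and positivity from `S`.
-/

section Monoid

variable {A : Type*} [Monoid A] {s t b j : A}

theorem eq_mul_of_mul_eq_one_of_mul_eq (hs : IsLeftRegular s) (hsb : Commute s b)
    (hst : s * t = 1) (hj : s * j = b) : j = b * t :=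
  hs <| show s * j = s * (b * t) by rw [hj, hsb.left_comm, hst, mul_one]

theorem mul_self_eq_neg_one_of_mul_eq [HasDistribNeg A] (hs : IsLeftRegular s)
    (hsb : Commute s b) (hss : s * s = -(b * b)) (hj : s * j = b) : j * j = -1 :=
  hs.mul hs <|
    calc s * s * (j * j) = s * (s * j * j) := by simp only [mul_assoc]
      _ = b * (s * j) := by rw [hj, hsb.left_comm, hj]
      _ = s * s * -1 := by rw [hj, hss, mul_neg_one, neg_neg]

end Monoid

section BilinearMap

variable {R M N P : Type*} [CommSemiring R] [AddCommMonoid M] [Module R M]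
  [AddCommMonoid N] [Module R N] [AddCommMonoid P] [Module R P]

theorem isAdjointPair_of_rightInverse {b : M →ₗ[R] M →ₗ[R] P} {c : N →ₗ[R] N →ₗ[R] P}
    {f : M → N} {g : N → M} {f' : N → M} {g' : M → N} (h : b.IsAdjointPair c f g)
    (hf : Function.RightInverse f' f) (hg : Function.RightInverse g' g) :
    c.IsAdjointPair b f' g' := fun x y ↦
  calc b (f' x) y = b (f' x) (g (g' y)) := by rw [hg y]
    _ = c (f (f' x)) (g' y) := (h _ _).symm
    _ = c x (g' y) := by rw [hf x]

variable [Preorder P]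

theorem apply_rightInverse_pos {b : N →ₗ[R] M →ₗ[R] P} {f : M →ₗ[R] N} {f' : N → M}
    (hpos : ∀ x, x ≠ 0 → 0 < b (f x) x) (hf : Function.RightInverse f' f) {y : N} (hy : y ≠ 0) :
    0 < b y (f' y) := by
  have hf'y : f' y ≠ 0 := fun h ↦ hy <| by rw [← hf y, h, map_zero]
  simpa only [hf y] using hpos (f' y) hf'y

end BilinearMap

section Positive

variable {R M N P : Type*} [CommSemiring R] [AddCommGroup M] [Module R M]
  [AddCommMonoid N] [Module R N] [AddCommMonoid P] [Module R P] [Preorder P]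

theorem injective_of_forall_apply_pos {b : N →ₗ[R] M →ₗ[R] P} {f : M →ₗ[R] N}
    (hpos : ∀ x, x ≠ 0 → 0 < b (f x) x) : Function.Injective f :=
  (injective_iff_map_eq_zero f).2 fun x hx ↦ by_contra fun hne ↦
    (hpos x hne).ne' <| by rw [hx, map_zero, LinearMap.zero_apply]

end Positive

theorem stmt3_general {R M : Type*} [CommSemiring R] [Preorder R] [AddCommGroup M] [Module R M]
    {b ω : M →ₗ[R] M →ₗ[R] R} (hb : b.IsSymm) {B S T J : M →ₗ[R] M}
    (hB : ∀ ξ η, b ξ η = ω ξ (B η)) (hSsa : b.IsSelfAdjoint S)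
    (hSpd : ∀ x, x ≠ 0 → 0 < b (S x) x) (hSS : S ∘ₗ S = -(B ∘ₗ B)) (hSB : S ∘ₗ B = B ∘ₗ S)
    (hST : S ∘ₗ T = LinearMap.id) (hJ : S ∘ₗ J = B) :
    J ∘ₗ J = -LinearMap.id ∧
      (∀ ξ η, ω ξ (J η) = ω η (J ξ)) ∧
      ∀ ξ, ω ξ (J ξ) = b ξ (T ξ) ∧ (ξ ≠ 0 → 0 < ω ξ (J ξ)) := by
  have hS : IsLeftRegular (S : Module.End R M) := fun _ _ ↦
    (LinearMap.cancel_left (injective_of_forall_apply_pos hSpd)).1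
  have hTS : Function.RightInverse T S := LinearMap.congr_fun hST
  have hTsa : b.IsSelfAdjoint T := isAdjointPair_of_rightInverse hSsa hTS hTS
  have hJT : J = B ∘ₗ T := eq_mul_of_mul_eq_one_of_mul_eq hS hSB hST hJ
  have hωJ (ξ η : M) : ω ξ (J η) = b ξ (T η) := by rw [hJT, hB, LinearMap.comp_apply]
  refine ⟨mul_self_eq_neg_one_of_mul_eq hS hSB hSS hJ, fun ξ η ↦ ?_,
    fun ξ ↦ ⟨hωJ ξ ξ, fun hξ ↦ ?_⟩⟩
  · calc ω ξ (J η) = b ξ (T η) := hωJ ξ η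
      _ = b (T ξ) η := (hTsa ξ η).symm
      _ = b η (T ξ) := hb.eq (T ξ) η
      _ = ω η (J ξ) := (hωJ η ξ).symm
  · rw [hωJ]
    exact apply_rightInverse_pos hSpd hTS hξ

/-- The map `J = S⁻¹ ∘ B` is an `ω`-compatible complex structure, where `B` is determined
by `⟪ξ, η⟫ = ω ξ (B η)` and `S` is the self-adjoint positive definite square root of
`-B∘B` commuting with `B` (with two-sided inverse `T`). -/
theorem stmt3 {E : Type*} [NormedAddCommGroup E] [InnerProductSpace ℝ E]
    [FiniteDimensional ℝ E]
    (ω : E →ₗ[ℝ] E →ₗ[ℝ] ℝ)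
    (halt : ∀ ξ : E, ω ξ ξ = 0)
    (hnd : ∀ ξ : E, (∀ η : E, ω ξ η = 0) → ξ = 0)
    (B : E →ₗ[ℝ] E)
    (hB : ∀ ξ η : E, (inner ℝ ξ η : ℝ) = ω ξ (B η))
    (S : E →ₗ[ℝ] E)
    (hSsa : ∀ x y : E, (inner ℝ (S x) y : ℝ) = (inner ℝ x (S y) : ℝ))
    (hSpd : ∀ x : E, x ≠ 0 → 0 < (inner ℝ (S x) x : ℝ))
    (hSS : S ∘ₗ S = -(B ∘ₗ B))
    (hSB : S ∘ₗ B = B ∘ₗ S)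
    (T : E →ₗ[ℝ] E) (hST : S ∘ₗ T = LinearMap.id) (hTS : T ∘ₗ S = LinearMap.id)
    (J : E →ₗ[ℝ] E) (hJ : S ∘ₗ J = B) :
    J ∘ₗ J = -LinearMap.id ∧
      (∀ ξ η : E, ω ξ (J η) = ω η (J ξ)) ∧
      ∀ ξ : E, ω ξ (J ξ) = (inner ℝ ξ (T ξ) : ℝ) ∧ (ξ ≠ 0 → 0 < ω ξ (J ξ)) :=
  stmt3_general (b := innerₗ E) isSymm_inner hB hSsa hSpd hSS hSB hST hJ
end

section
/- Let H be a complex normed vector space, W a subspace of H, and A, K : W → H linear maps. Assume: (1) there exist constants C₀ > 0 and r₀ > 0 such that for every real α with |α| ≥ r₀ and every ξ ∈ W one has C₀·|α|·‖ξ‖ ≤ ‖A ξ − (iα)·ξ‖; (2) K has vanishing A-bound, i.e. for every ε > 0 there exists b ≥ 0 such that ‖K ξ‖ ≤ ε·‖A ξ‖ + b·‖ξ‖ for all ξ ∈ W. Then there exist constants C₁ > 0 and r₁ > 0 such that for every real α with |α| ≥ r₁ and every ξ ∈ W one has C₁·|α|·‖ξ‖ ≤ ‖(A + K) ξ − (iα)·ξ‖.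 -/
/-!
For `0 ≤ ε ≤ 1`, an admissible relative constant `ε` for `K` and the triangle inequality give
`‖(A + K) ξ - z • ξ‖ ≥ (1 - ε) ‖A ξ - z • ξ‖ - ε ‖z • ξ‖ - b ‖ξ‖`. The estimate for `A` bounds the
first two terms below by `(C - ε (1 + C)) ‖z‖ ‖ξ‖`, whose coefficient is positive exactly when
`ε < C / (1 + C)`, and `b ‖ξ‖` is a small fraction of `‖z‖ ‖ξ‖` once `‖z‖` is large.
-/

section RelativeBound

variable {E : Type*} [SeminormedAddCommGroup E]

/-- `K` is `A`-bounded with relative constant `ε`, for arbitrary maps `A` and `K` on a set `D` of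
vectors. The `A`-bound of `K` is the infimum of the admissible `ε ≥ 0`. -/
def IsRelBounded {D : Set E} (A K : D → E) (ε : ℝ) : Prop :=
  ∃ b ≥ (0 : ℝ), ∀ ξ : D, ‖K ξ‖ ≤ ε * ‖A ξ‖ + b * ‖(ξ : E)‖

theorem mul_norm_sub_le_norm_add_sub {a k y : E} {C ε δ : ℝ} (hε₀ : 0 ≤ ε) (hε₁ : ε ≤ 1)
    (ha : C * ‖y‖ ≤ ‖a - y‖) (hk : ‖k‖ ≤ ε * ‖a‖ + δ) :
    (C - ε * (1 + C)) * ‖y‖ - δ ≤ ‖a + k - y‖ := by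
  have ha_norm : ‖a‖ ≤ ‖a - y‖ + ‖y‖ := norm_le_norm_sub_add a y
  have h_triangle : ‖a - y‖ - ‖k‖ ≤ ‖a + k - y‖ := by
    simpa only [add_sub_right_comm] using norm_sub_le_norm_add (a - y) k
  calc
    (C - ε * (1 + C)) * ‖y‖ - δ = (1 - ε) * (C * ‖y‖) - ε * ‖y‖ - δ := by ring
    _ ≤ (1 - ε) * ‖a - y‖ - ε * ‖y‖ - δ := by
      have : 0 ≤ 1 - ε := sub_nonneg.2 hε₁
      gcongr
    _ = ‖a - y‖ - (ε * (‖a - y‖ + ‖y‖) + δ) := by ring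
    _ ≤ ‖a - y‖ - (ε * ‖a‖ + δ) := by gcongr
    _ ≤ ‖a - y‖ - ‖k‖ := by gcongr
    _ ≤ ‖a + k - y‖ := h_triangle

end RelativeBound

section RabierEstimate

variable {𝕜 E : Type*} [NormedField 𝕜] [SeminormedAddCommGroup E] [NormedSpace 𝕜 E]

/-- The quantitative Rabier estimate with constant `C` for a map `A` defined on a set `D` of
vectors: a lower bound on `A - z` for all large spectral parameters `z` in `S`. The classical
case is `S = iℝ`. -/
def RabierEstimate (S : Set 𝕜) {D : Set E} (A : D → E) (C : ℝ) : Prop :=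
  ∃ r > (0 : ℝ), ∀ z ∈ S, r ≤ ‖z‖ → ∀ ξ : D, C * ‖z‖ * ‖(ξ : E)‖ ≤ ‖A ξ - z • (ξ : E)‖

theorem RabierEstimate.add {S : Set 𝕜} {D : Set E} {A K : D → E} {C C' ε : ℝ}
    (hA : RabierEstimate S A C) (hK : IsRelBounded A K ε) (hε₀ : 0 ≤ ε) (hε₁ : ε ≤ 1)
    (hC' : C' < C - ε * (1 + C)) : RabierEstimate S (A + K) C' := by
  obtain ⟨r, hr, hA⟩ := hA
  obtain ⟨b, -, hK⟩ := hK
  set gap := C - ε * (1 + C) - C' with hgap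
  have hgap_pos : 0 < gap := sub_pos.2 hC'
  refine ⟨max r (b / gap), lt_max_of_lt_left hr, fun z hzS hz ξ ↦ ?_⟩
  have hAξ : C * ‖z • (ξ : E)‖ ≤ ‖A ξ - z • (ξ : E)‖ := by
    simpa only [norm_smul, mul_assoc] using hA z hzS (le_of_max_le_left hz) ξ
  have hb : b ≤ gap * ‖z‖ := (div_le_iff₀' hgap_pos).1 (le_of_max_le_right hz)
  calc
    C' * ‖z‖ * ‖(ξ : E)‖
        = (C - ε * (1 + C)) * ‖z • (ξ : E)‖ - gap * ‖z‖ * ‖(ξ : E)‖ := by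
      rw [norm_smul, hgap]; ring
    _ ≤ (C - ε * (1 + C)) * ‖z • (ξ : E)‖ - b * ‖(ξ : E)‖ := by gcongr
    _ ≤ ‖(A + K) ξ - z • (ξ : E)‖ := mul_norm_sub_le_norm_add_sub hε₀ hε₁ hAξ (hK ξ)

theorem rabierEstimate_range_I_mul_iff {E : Type*} [SeminormedAddCommGroup E] [NormedSpace ℂ E]
    {D : Set E} {A : D → E} {C : ℝ} :
    RabierEstimate (Set.range fun α : ℝ ↦ Complex.I * (α : ℂ)) A C ↔
      ∃ r > (0 : ℝ), ∀ α : ℝ, r ≤ |α| →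
        ∀ ξ : D, C * |α| * ‖(ξ : E)‖ ≤ ‖A ξ - (Complex.I * (α : ℂ)) • (ξ : E)‖ := by
  simp only [RabierEstimate, Set.forall_mem_range, norm_mul, Complex.norm_I, one_mul,
    Complex.norm_real, Real.norm_eq_abs]

theorem stmt10_general {S : Set 𝕜} {D : Set E} {A K : D → E} {C ε : ℝ} (hC : 0 < C)
    (hA : RabierEstimate S A C) (hK : IsRelBounded A K ε) (hε₀ : 0 ≤ ε) (hε : ε < C / (1 + C)) :
    ∃ C' > 0, RabierEstimate S (A + K) C' := by
  have hε_mul : ε * (1 + C) < C := (lt_div_iff₀ (by positivity)).1 hε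
  have hε₁ : ε ≤ 1 := hε.le.trans (div_le_one_of_le₀ (by linarith) (by positivity))
  obtain ⟨C', hC'_pos, hC'⟩ := exists_between (sub_pos.2 hε_mul)
  exact ⟨C', hC'_pos, hA.add hK hε₀ hε₁ hC'⟩

end RabierEstimate

/-- Stability of the quantitative Rabier estimate under perturbations with vanishing
`A`-bound: if `C₀|α|‖ξ‖ ≤ ‖Aξ − iαξ‖` for `|α| ≥ r₀` and `K` has vanishing `A`-bound,
then there are `C₁ > 0`, `r₁ > 0` with `C₁|α|‖ξ‖ ≤ ‖(A+K)ξ − iαξ‖` for `|α| ≥ r₁`. -/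
theorem stmt10 {H : Type*} [NormedAddCommGroup H] [NormedSpace ℂ H]
    (W : Subspace ℂ H) (A K : W →ₗ[ℂ] H)
    (hA : ∃ C₀ > (0:ℝ), ∃ r₀ > (0:ℝ), ∀ α : ℝ, r₀ ≤ |α| →
      ∀ ξ : W, C₀ * |α| * ‖(ξ : H)‖ ≤ ‖A ξ - (Complex.I * (α : ℂ)) • (ξ : H)‖)
    (hK : ∀ ε > (0:ℝ), ∃ b ≥ (0:ℝ), ∀ ξ : W, ‖K ξ‖ ≤ ε * ‖A ξ‖ + b * ‖(ξ : H)‖) :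
    ∃ C₁ > (0:ℝ), ∃ r₁ > (0:ℝ), ∀ α : ℝ, r₁ ≤ |α| →
      ∀ ξ : W, C₁ * |α| * ‖(ξ : H)‖ ≤ ‖(A ξ + K ξ) - (Complex.I * (α : ℂ)) • (ξ : H)‖ := by
  obtain ⟨C₀, hC₀, hA⟩ := hA
  have hθ : 0 < C₀ / (1 + C₀) := by positivity
  obtain ⟨C₁, hC₁, hAK⟩ := stmt10_general hC₀ (rabierEstimate_range_I_mul_iff.2 hA)
    (hK _ (half_pos hθ)) (half_pos hθ).le (half_lt_self hθ)
  exact ⟨C₁, hC₁, rabierEstimate_range_I_mul_iff.1 hAK⟩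
end

section
/- Let Q be a symmetric positive definite real k×k matrix and define a sequence of matrices by R₁ = 𝟙 and R_{n+1} = (1/2)·(R_n + R_n⁻¹·Q) for n ≥ 1. Then for every n ≥ 1 the matrix R_n commutes with Q and is symmetric positive definite. -/
/-!
If `A` is positive definite and commutes with the positive semidefinite matrix `Q`, then `A⁻¹` has
both properties as well, so `A⁻¹ * Q` is positive semidefinite, being a product of commuting
positive semidefinite matrices. Its average with `A` is therefore positive definite and still
commutes with `Q`, and both properties propagate along the iteration.
-/

section Commute

variable {n : Type*} [Fintype n] [DecidableEq n]

theorem commute_nonsing_inv_left {α : Type*} [CommRing α] {A B : Matrix n n α}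
    (h : Commute A B) : Commute A⁻¹ B := by
  simpa only [Matrix.zpow_neg_one] using Matrix.Commute.zpow_left h (-1)

/-- One step of Heron's iteration for the square root of `Q`: the average of `A` and `A⁻¹ * Q`.
It has this meaning for invertible `A` and in characteristic other than two; otherwise `A⁻¹` or
`1 / 2` is the junk value `0`. -/
noncomputable def heronStep {K : Type*} [Field K] (Q A : Matrix n n K) : Matrix n n K :=
  ((1 : K) / 2) • (A + A⁻¹ * Q)

theorem commute_heronStep {K : Type*} [Field K] {Q A : Matrix n n K} (h : Commute A Q) :
    Commute (heronStep Q A) Q :=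
  (h.add_left ((commute_nonsing_inv_left h).mul_left (Commute.refl Q))).smul_left _

end Commute

section PosDef

open scoped ComplexOrder

variable {𝕜 n : Type*} [RCLike 𝕜] [Fintype n]

open scoped MatrixOrder Matrix.Norms.L2Operator in
theorem posSemidef_mul_of_commute {A B : Matrix n n 𝕜} (hA : A.PosSemidef) (hB : B.PosSemidef)
    (h : Commute A B) : (A * B).PosSemidef := by
  classical
  exact Matrix.nonneg_iff_posSemidef.mp (h.mul_nonneg hA.nonneg hB.nonneg)

variable [DecidableEq n] {Q : Matrix n n 𝕜}

theorem posDef_heronStep {A : Matrix n n 𝕜} (hQ : Q.PosSemidef) (hA : A.PosDef)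
    (h : Commute A Q) : (heronStep Q A).PosDef :=
  have hAQ : (A⁻¹ * Q).PosSemidef :=
    posSemidef_mul_of_commute hA.inv.posSemidef hQ (commute_nonsing_inv_left h)
  (hA.add_posSemidef hAQ).smul one_half_pos

theorem stmt14_general (hQ : Q.PosSemidef) {R : ℕ → Matrix n n 𝕜} (hcomm : Commute (R 1) Q)
    (hpos : (R 1).PosDef) (hrec : ∀ m : ℕ, 1 ≤ m → R (m + 1) = heronStep Q (R m)) :
    ∀ m : ℕ, 1 ≤ m → Commute (R m) Q ∧ (R m).PosDef := by
  intro m hm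
  induction m, hm using Nat.le_induction with
  | base => exact ⟨hcomm, hpos⟩
  | succ m hm ih =>
    obtain ⟨ihcomm, ihpos⟩ := ih
    rw [hrec m hm]
    exact ⟨commute_heronStep ihcomm, posDef_heronStep hQ ihpos ihcomm⟩

end PosDef

/-- Heron matrix iteration: for a symmetric positive definite real `k×k` matrix `Q`,
with `R₁ = 𝟙` and `R_{n+1} = (1/2)(R_n + R_n⁻¹ Q)`, each `R_n` (n ≥ 1) commutes
with `Q` and is symmetric positive definite. -/
theorem stmt14 (k : ℕ) (Q : Matrix (Fin k) (Fin k) ℝ) (hQ : Q.PosDef)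
    (R : ℕ → Matrix (Fin k) (Fin k) ℝ) (hR1 : R 1 = 1)
    (hrec : ∀ n : ℕ, 1 ≤ n → R (n + 1) = ((1:ℝ)/2) • (R n + (R n)⁻¹ * Q)) :
    ∀ n : ℕ, 1 ≤ n → R n * Q = Q * R n ∧ (R n).transpose = R n ∧ (R n).PosDef := by
  intro n hn
  obtain ⟨hcomm, hpos⟩ := stmt14_general hQ.posSemidef (hR1 ▸ .one_left Q) (hR1 ▸ .one) hrec n hn
  exact ⟨hcomm.eq, hpos.isHermitian.eq, hpos⟩
end

section
/- Let Q be a symmetric positive definite real k×k matrix and define a sequence of matrices by R₁ = 𝟙 and R_{n+1} = (1/2)·(R_n + R_n⁻¹·Q) for n ≥ 1. Then the sequence (R_n) converges to a matrix R which is symmetric, positive definite, and satisfies R·R = Q. -/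
/-!
`R_{n+1}` is obtained by applying a real function `h_n` to `Q`, where `h_n x` is the `n`-th term of
Heron's scalar iteration for `√x`, so it suffices to study the scalar iteration. Its error satisfies
`h_{n+1} - √x = (h_n - √x)² / (2 h_n) ≥ 0`, hence from the second term on it is nonnegative and at
least halved in every step, and `h_n → √·` uniformly on bounded sets of nonnegative reals. By
continuity of the functional calculus, `R_n` converges to the square root of `Q`.
-/

open Filter Set Topology
open scoped Ring

/-- Heron's iteration for the square root of `x`, started at `c`. It gives the
eigenvalues of the matrix iterates; since the index starts at `0` here and at `1` there, the
`n`-th term belongs to `R (n + 1)`. -/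
noncomputable def heronIter (c x : ℝ) : ℕ → ℝ
  | 0 => c
  | n + 1 => 1 / 2 * (heronIter c x n + (heronIter c x n)⁻¹ * x)

section Scalar

variable {c x : ℝ}

lemma heronIter_pos (hc : 0 < c) (hx : 0 ≤ x) (n : ℕ) : 0 < heronIter c x n := by
  induction n with
  | zero => exact hc
  | succ n ih => rw [heronIter]; positivity

lemma heronIter_succ_sub_sqrt (hc : 0 < c) (hx : 0 ≤ x) (n : ℕ) :
    heronIter c x (n + 1) - √x = (heronIter c x n - √x) ^ 2 / (2 * heronIter c x n) := by
  have hpos := heronIter_pos hc hx n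
  rw [heronIter]
  field_simp
  linear_combination -Real.sq_sqrt hx

lemma sqrt_le_heronIter_succ (hc : 0 < c) (hx : 0 ≤ x) (n : ℕ) :
    √x ≤ heronIter c x (n + 1) := by
  have hpos := heronIter_pos hc hx n
  rw [← sub_nonneg, heronIter_succ_sub_sqrt hc hx]
  positivity

lemma heronIter_succ_sub_sqrt_le_half (hc : 0 < c) (hx : 0 ≤ x) {n : ℕ}
    (hn : √x ≤ heronIter c x n) :
    heronIter c x (n + 1) - √x ≤ 1 / 2 * (heronIter c x n - √x) := by
  have hle : (heronIter c x n)⁻¹ * x ≤ √x := by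
    rw [inv_mul_le_iff₀ (heronIter_pos hc hx n)]
    calc x = √x * √x := (Real.mul_self_sqrt hx).symm
      _ ≤ heronIter c x n * √x := by gcongr
  rw [heronIter]
  linarith

lemma heronIter_succ_sub_sqrt_le (hc : 0 < c) (hx : 0 ≤ x) (n : ℕ) :
    heronIter c x (n + 1) - √x ≤ (1 / 2) ^ n * (1 / 2 * (c + c⁻¹ * x)) := by
  induction n with
  | zero => simp [heronIter]
  | succ n ih =>
    calc heronIter c x (n + 1 + 1) - √x
        ≤ 1 / 2 * (heronIter c x (n + 1) - √x) :=
          heronIter_succ_sub_sqrt_le_half hc hx (sqrt_le_heronIter_succ hc hx n)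
      _ ≤ 1 / 2 * ((1 / 2) ^ n * (1 / 2 * (c + c⁻¹ * x))) := by gcongr
      _ = (1 / 2) ^ (n + 1) * (1 / 2 * (c + c⁻¹ * x)) := by ring

lemma continuousOn_heronIter (hc : 0 < c) (n : ℕ) :
    ContinuousOn (fun x ↦ heronIter c x n) (Ici 0) := by
  induction n with
  | zero => exact continuousOn_const
  | succ n ih =>
    have hinv := ih.inv₀ fun x hx ↦ (heronIter_pos hc hx n).ne'
    exact continuousOn_const.mul (ih.add (hinv.mul continuousOn_id))

lemma tendstoUniformlyOn_heronIter (hc : 0 < c) {s : Set ℝ} (hs : s ⊆ Ici 0)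
    (hbdd : BddAbove s) :
    TendstoUniformlyOn (fun n x ↦ heronIter c x (n + 1)) Real.sqrt atTop s := by
  obtain ⟨M, hM⟩ := hbdd
  have hbound : Tendsto (fun n : ℕ ↦ (1 / 2 : ℝ) ^ n * (1 / 2 * (c + c⁻¹ * M))) atTop (𝓝 0) := by
    simpa only [zero_mul] using
      (tendsto_pow_atTop_nhds_zero_of_lt_one one_half_pos.le one_half_lt_one).mul_const
        (1 / 2 * (c + c⁻¹ * M))
  rw [Metric.tendstoUniformlyOn_iff]
  intro ε hε
  filter_upwards [hbound.eventually_lt_const hε] with n hn x hx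
  rw [dist_comm, Real.dist_eq,
    abs_of_nonneg (sub_nonneg.2 (sqrt_le_heronIter_succ hc (hs hx) n))]
  calc heronIter c x (n + 1) - √x
      ≤ (1 / 2) ^ n * (1 / 2 * (c + c⁻¹ * x)) := heronIter_succ_sub_sqrt_le hc (hs hx) n
    _ ≤ (1 / 2) ^ n * (1 / 2 * (c + c⁻¹ * M)) := by gcongr; exact hM hx
    _ < ε := hn

end Scalar

section FunctionalCalculus

variable {A : Type*} [Ring A] [StarRing A] [TopologicalSpace A] [Algebra ℝ A]
  [ContinuousFunctionalCalculus ℝ A IsSelfAdjoint] {a : A} {c : ℝ}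

lemma cfc_heronIter_succ (ha : IsSelfAdjoint a) (hspec : spectrum ℝ a ⊆ Ici 0) (hc : 0 < c)
    (n : ℕ) :
    cfc (fun x ↦ heronIter c x (n + 1)) a =
      ((1 : ℝ) / 2) • (cfc (fun x ↦ heronIter c x n) a +
        (cfc (fun x ↦ heronIter c x n) a)⁻¹ʳ * a) := by
  have hne : ∀ x ∈ spectrum ℝ a, heronIter c x n ≠ 0 :=
    fun x hx ↦ (heronIter_pos hc (hspec hx) n).ne'
  have hcont : ContinuousOn (fun x ↦ heronIter c x n) (spectrum ℝ a) :=
    (continuousOn_heronIter hc n).mono hspec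
  have hinv : ContinuousOn (fun x ↦ (heronIter c x n)⁻¹) (spectrum ℝ a) := hcont.inv₀ hne
  have hmul : ContinuousOn (fun x ↦ (heronIter c x n)⁻¹ * x) (spectrum ℝ a) :=
    hinv.mul (continuousOn_id' _)
  simp only [heronIter]
  rw [cfc_const_mul _ _ a (hcont.fun_add hmul), cfc_add a _ _ hcont hmul,
    cfc_mul _ _ a hinv (continuousOn_id' _), cfc_inv _ a hne hcont ha, cfc_id' ℝ a ha]

lemma eq_cfc_heronIter (ha : IsSelfAdjoint a) (hspec : spectrum ℝ a ⊆ Ici 0) (hc : 0 < c)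
    {R : ℕ → A} (hR1 : R 1 = algebraMap ℝ A c)
    (hrec : ∀ n, 1 ≤ n → R (n + 1) = ((1 : ℝ) / 2) • (R n + (R n)⁻¹ʳ * a)) (n : ℕ) :
    R (n + 1) = cfc (fun x ↦ heronIter c x n) a := by
  induction n with
  | zero => exact hR1.trans (cfc_const c a ha).symm
  | succ n ih => rw [hrec (n + 1) n.succ_pos, ih, cfc_heronIter_succ ha hspec hc]

lemma tendsto_cfc_heronIter (hspec : spectrum ℝ a ⊆ Ici 0) (hc : 0 < c) :
    Tendsto (fun n ↦ cfc (fun x ↦ heronIter c x (n + 1)) a) atTop (𝓝 (cfc Real.sqrt a)) :=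
  tendsto_cfc_fun
    (tendstoUniformlyOn_heronIter hc hspec
      (ContinuousFunctionalCalculus.isCompact_spectrum a).bddAbove)
    (.of_forall fun n ↦ (continuousOn_heronIter hc (n + 1)).mono hspec)

end FunctionalCalculus

theorem stmt15_general {A : Type*} [PartialOrder A] [Ring A] [StarRing A] [TopologicalSpace A]
    [StarOrderedRing A] [Algebra ℝ A] [ContinuousFunctionalCalculus ℝ A IsSelfAdjoint]
    [NonnegSpectrumClass ℝ A] [IsSemitopologicalRing A] [T2Space A]
    {a : A} (ha : 0 ≤ a) {c : ℝ} (hc : 0 < c) {R : ℕ → A} (hR1 : R 1 = algebraMap ℝ A c)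
    (hrec : ∀ n, 1 ≤ n → R (n + 1) = ((1 : ℝ) / 2) • (R n + (R n)⁻¹ʳ * a)) :
    Tendsto R atTop (𝓝 (CFC.sqrt a)) := by
  have hspec : spectrum ℝ a ⊆ Ici 0 := fun x hx ↦ spectrum_nonneg_of_nonneg ha hx
  rw [CFC.sqrt_eq_real_sqrt a, cfcₙ_eq_cfc, ← tendsto_add_atTop_iff_nat 2]
  simpa only [eq_cfc_heronIter ha.isSelfAdjoint hspec hc hR1 hrec] using
    tendsto_cfc_heronIter hspec hc

open scoped MatrixOrder in
/-- Heron matrix iteration converges: for a symmetric positive definite real `k×k`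
matrix `Q`, with `R₁ = 𝟙` and `R_{n+1} = (1/2)(R_n + R_n⁻¹ Q)`, the sequence `(R_n)`
converges to a symmetric positive definite matrix `R` with `R·R = Q`. -/
theorem stmt15 (k : ℕ) (Q : Matrix (Fin k) (Fin k) ℝ) (hQ : Q.PosDef)
    (R : ℕ → Matrix (Fin k) (Fin k) ℝ) (hR1 : R 1 = 1)
    (hrec : ∀ n : ℕ, 1 ≤ n → R (n + 1) = ((1:ℝ)/2) • (R n + (R n)⁻¹ * Q)) :
    ∃ L : Matrix (Fin k) (Fin k) ℝ,
      Filter.Tendsto R Filter.atTop (nhds L) ∧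
      L.transpose = L ∧ L.PosDef ∧ L * L = Q := by
  have hL : (CFC.sqrt Q).PosDef :=
    Matrix.isStrictlyPositive_iff_posDef.1 (hQ.isStrictlyPositive.sqrt Q)
  simp only [Matrix.nonsing_inv_eq_ringInverse] at hrec
  exact ⟨CFC.sqrt Q, stmt15_general hQ.posSemidef.nonneg one_pos (by simpa using hR1) hrec,
    hL.isHermitian, hL, CFC.sqrt_mul_sqrt_self Q hQ.posSemidef.nonneg⟩
end

section
/- Let h : ℕ → ℝ be a monotone increasing sequence of positive real numbers and let n ∈ ℕ. Let η : ℝ → ℓ²(ℕ, ℝ) be a differentiable function such that: (i) ∫_ℝ ‖η'(s)‖²_{ℓ²} ds ≤ 1; (ii) ∫_ℝ (∑_{k} h(k)·η(s)(k)²) ds ≤ 1; (iii) η(s)(k) = 0 for every s ∈ ℝ and every k < n. Then sup_{s∈ℝ} ‖η(s)‖_{ℓ²} ≤ (3/h(n))^{1/4}. -/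
/-!
For a square-integrable curve `f` in a Hilbert space with square-integrable derivative,
integrate `(‖f‖²)' = 2⟪f, f'⟫` from `-∞` to `s` and from `s` to `∞`. Adding the two estimates gives
`2‖f s‖² ≤ ∫ 2|⟪f, f'⟫|`, and Cauchy–Schwarz yields Agmon's inequality `‖f s‖² ≤ ‖f‖₂ ‖f'‖₂`.
A sequence supported where the weight is at least `c` has weighted square norm at least `c` times
its square norm, so the weighted energy bound gives `‖f‖₂² ≤ 1 / c`.
-/

open MeasureTheory Set
open scoped ENNReal

theorem two_mul_enorm_le_lintegral_enorm_of_hasDerivAt {E : Type*} [NormedAddCommGroup E]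
    [NormedSpace ℝ E] [CompleteSpace E] {f f' : ℝ → E} (hderiv : ∀ x, HasDerivAt f (f' x) x)
    (hf : Integrable f) (hf' : Integrable f') (s : ℝ) :
    2 * ‖f s‖ₑ ≤ ∫⁻ x, ‖f' x‖ₑ := by
  have left_le : ‖f s‖ₑ ≤ ∫⁻ x in Iic s, ‖f' x‖ₑ := by
    have hlim := tendsto_zero_of_hasDerivAt_of_integrableOn_Iic (a := s) (fun x _ ↦ hderiv x)
      hf'.integrableOn hf.integrableOn
    have hint := integral_Iic_of_hasDerivAt_of_tendsto' (a := s) (fun x _ ↦ hderiv x)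
      hf'.integrableOn hlim
    simpa only [hint, sub_zero] using
      enorm_integral_le_lintegral_enorm (μ := volume.restrict (Iic s)) f'
  have right_le : ‖f s‖ₑ ≤ ∫⁻ x in Ioi s, ‖f' x‖ₑ := by
    have hlim := tendsto_zero_of_hasDerivAt_of_integrableOn_Ioi (a := s) (fun x _ ↦ hderiv x)
      hf'.integrableOn hf.integrableOn
    have hint := integral_Ioi_of_hasDerivAt_of_tendsto' (a := s) (fun x _ ↦ hderiv x)
      hf'.integrableOn hlim
    simpa only [hint, zero_sub, enorm_neg] using
      enorm_integral_le_lintegral_enorm (μ := volume.restrict (Ioi s)) f'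
  calc 2 * ‖f s‖ₑ = ‖f s‖ₑ + ‖f s‖ₑ := two_mul _
    _ ≤ (∫⁻ x in Iic s, ‖f' x‖ₑ) + ∫⁻ x in Ioi s, ‖f' x‖ₑ := add_le_add left_le right_le
    _ = ∫⁻ x, ‖f' x‖ₑ := by rw [← compl_Iic, lintegral_add_compl _ measurableSet_Iic]

theorem eLpNorm_two_sq {α ε : Type*} [MeasurableSpace α] [TopologicalSpace ε]
    [ContinuousENorm ε] (f : α → ε) (μ : Measure α) :
    eLpNorm f 2 μ ^ 2 = ∫⁻ x, ‖f x‖ₑ ^ 2 ∂μ := by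
  simpa using eLpNorm_nnreal_pow_eq_lintegral (f := f) (μ := μ) (two_ne_zero (α := NNReal))

theorem memLp_two_of_lintegral_enorm_sq_ne_top {α ε : Type*} [MeasurableSpace α]
    [TopologicalSpace ε] [ContinuousENorm ε] {f : α → ε} {μ : Measure α}
    (hf : AEStronglyMeasurable f μ) (hint : ∫⁻ x, ‖f x‖ₑ ^ 2 ∂μ ≠ ∞) : MemLp f 2 μ := by
  rw [← eLpNorm_two_sq, ENNReal.pow_ne_top_iff] at hint
  exact ⟨hf, lt_top_iff_ne_top.2 (hint.resolve_right two_ne_zero)⟩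

section Agmon

variable {E : Type*} [NormedAddCommGroup E] [InnerProductSpace ℝ E] {f f' : ℝ → E}

theorem enorm_sq_le_eLpNorm_mul_eLpNorm_of_hasDerivAt (hderiv : ∀ x, HasDerivAt f (f' x) x)
    (hf : MemLp f 2) (hf' : MemLp f' 2) (s : ℝ) :
    ‖f s‖ₑ ^ 2 ≤ eLpNorm f 2 * eLpNorm f' 2 := by
  have hinner_le (x : ℝ) : ‖inner ℝ (f x) (f' x)‖₊ ≤ 1 * ‖f x‖₊ * ‖f' x‖₊ := by
    simpa only [one_mul] using nnnorm_inner_le_nnnorm (𝕜 := ℝ) (f x) (f' x)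
  have hinner : Integrable fun x ↦ inner ℝ (f x) (f' x) :=
    memLp_one_iff_integrable.1 <|
      hf.of_bilin _ 1 hf' (hf.1.inner hf'.1) (.of_forall hinner_le)
  have hsq : Integrable fun x ↦ ‖f x‖ ^ 2 := hf.integrable_norm_pow two_ne_zero
  have two_mul_le : 2 * ‖f s‖ₑ ^ 2 ≤ 2 * ∫⁻ x, ‖inner ℝ (f x) (f' x)‖ₑ := by
    have hle := two_mul_enorm_le_lintegral_enorm_of_hasDerivAt (fun x ↦ (hderiv x).norm_sq)
      hsq (hinner.const_mul 2) s
    simp only [enorm_mul, enorm_pow, enorm_norm] at hle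
    rwa [lintegral_const_mul' _ _ enorm_ne_top, Real.enorm_eq_ofReal zero_le_two,
      ENNReal.ofReal_ofNat] at hle
  have cauchy_schwarz : ∫⁻ x, ‖inner ℝ (f x) (f' x)‖ₑ ≤ eLpNorm f 2 * eLpNorm f' 2 := by
    simpa only [eLpNorm_one_eq_lintegral_enorm, ENNReal.coe_one, one_mul] using
      eLpNorm_le_eLpNorm_mul_eLpNorm_of_nnnorm (r := 1) hf.1 hf'.1 _ 1 (.of_forall hinner_le)
  have le_lintegral : ‖f s‖ₑ ^ 2 ≤ ∫⁻ x, ‖inner ℝ (f x) (f' x)‖ₑ :=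
    (ENNReal.mul_le_mul_iff_right two_ne_zero ENNReal.ofNat_ne_top).1 two_mul_le
  exact le_lintegral.trans cauchy_schwarz

theorem enorm_pow_four_le_lintegral_mul_lintegral_deriv [CompleteSpace E]
    (hf : Differentiable ℝ f) (hint : ∫⁻ x, ‖f x‖ₑ ^ 2 ≠ ∞)
    (hint' : ∫⁻ x, ‖deriv f x‖ₑ ^ 2 ≠ ∞) (s : ℝ) :
    ‖f s‖ₑ ^ 4 ≤ (∫⁻ x, ‖f x‖ₑ ^ 2) * ∫⁻ x, ‖deriv f x‖ₑ ^ 2 := by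
  have hmem : MemLp f 2 :=
    memLp_two_of_lintegral_enorm_sq_ne_top hf.continuous.aestronglyMeasurable hint
  have hmem' : MemLp (deriv f) 2 :=
    memLp_two_of_lintegral_enorm_sq_ne_top (aestronglyMeasurable_deriv f _) hint'
  have agmon : ‖f s‖ₑ ^ 2 ≤ eLpNorm f 2 * eLpNorm (deriv f) 2 :=
    enorm_sq_le_eLpNorm_mul_eLpNorm_of_hasDerivAt (fun x ↦ (hf x).hasDerivAt) hmem hmem' s
  calc ‖f s‖ₑ ^ 4 = (‖f s‖ₑ ^ 2) ^ 2 := by simp only [← pow_mul, Nat.reduceMul]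
    _ ≤ (eLpNorm f 2 * eLpNorm (deriv f) 2) ^ 2 := by gcongr
    _ = (∫⁻ x, ‖f x‖ₑ ^ 2) * ∫⁻ x, ‖deriv f x‖ₑ ^ 2 := by
      rw [mul_pow, eLpNorm_two_sq, eLpNorm_two_sq]

end Agmon

section WeightedSequence

variable {ι : Type*} {G : ι → Type*} [∀ i, NormedAddCommGroup (G i)]

theorem lp_two_enorm_sq_eq_tsum (x : lp G 2) : ‖x‖ₑ ^ 2 = ∑' i, ‖x i‖ₑ ^ 2 := by
  have hsum : HasSum (fun i ↦ ‖x i‖ ^ 2) (‖x‖ ^ 2) := by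
    simpa using lp.hasSum_norm (by norm_num) x
  simp only [← ofReal_norm, ← ENNReal.ofReal_pow (norm_nonneg _)]
  rw [← hsum.tsum_eq, ENNReal.ofReal_tsum_of_nonneg (fun _ ↦ by positivity) hsum.summable]

theorem ofReal_mul_enorm_sq_le_tsum_weight {w : ι → ℝ} {c : ℝ} {x : lp G 2}
    (hx : ∀ i, x i ≠ 0 → c ≤ w i) :
    ENNReal.ofReal c * ‖x‖ₑ ^ 2 ≤ ∑' i, ENNReal.ofReal (w i * ‖x i‖ ^ 2) := by
  rw [lp_two_enorm_sq_eq_tsum, ← ENNReal.tsum_mul_left]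
  refine ENNReal.tsum_le_tsum fun i ↦ ?_
  rw [ENNReal.ofReal_mul' (by positivity), ENNReal.ofReal_pow (norm_nonneg _), ofReal_norm]
  rcases eq_or_ne (x i) 0 with hxi | hxi
  · simp [hxi]
  · gcongr
    exact hx i hxi

theorem stmt18_general [∀ i, InnerProductSpace ℝ (G i)] [∀ i, CompleteSpace (G i)]
    {w : ι → ℝ} {c : ℝ} (hc : 0 < c) {η : ℝ → lp G 2} (hη : Differentiable ℝ η)
    (hderiv : ∫⁻ s, ENNReal.ofReal (‖deriv η s‖ ^ 2) ≤ 1)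
    (henergy : ∫⁻ s, ∑' i, ENNReal.ofReal (w i * ‖η s i‖ ^ 2) ≤ 1)
    (hsupp : ∀ s i, η s i ≠ 0 → c ≤ w i) (s : ℝ) :
    ‖η s‖ ≤ (1 / c) ^ ((1 : ℝ) / 4) := by
  have hderiv_sq : ∫⁻ s, ‖deriv η s‖ₑ ^ 2 ≤ 1 := by
    simpa only [ENNReal.ofReal_pow (norm_nonneg _), ofReal_norm] using hderiv
  have hη_sq : ∫⁻ s, ‖η s‖ₑ ^ 2 ≤ ENNReal.ofReal (1 / c) := by
    have : ENNReal.ofReal c * ∫⁻ s, ‖η s‖ₑ ^ 2 ≤ 1 := by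
      rw [← lintegral_const_mul' _ _ ENNReal.ofReal_ne_top]
      exact (lintegral_mono fun s ↦ ofReal_mul_enorm_sq_le_tsum_weight (hsupp s)).trans henergy
    rwa [one_div, ENNReal.ofReal_inv_of_pos hc, ENNReal.le_inv_iff_mul_le, mul_comm]
  have hpow : ‖η s‖ₑ ^ 4 ≤ ENNReal.ofReal (1 / c) :=
    calc ‖η s‖ₑ ^ 4 ≤ (∫⁻ x, ‖η x‖ₑ ^ 2) * ∫⁻ x, ‖deriv η x‖ₑ ^ 2 :=
          enorm_pow_four_le_lintegral_mul_lintegral_deriv hη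
            (ne_top_of_le_ne_top ENNReal.ofReal_ne_top hη_sq)
            (ne_top_of_le_ne_top ENNReal.one_ne_top hderiv_sq) s
      _ ≤ ENNReal.ofReal (1 / c) * 1 := mul_le_mul' hη_sq hderiv_sq
      _ = ENNReal.ofReal (1 / c) := mul_one _
  rw [← ofReal_norm, ← ENNReal.ofReal_pow (norm_nonneg _),
    ENNReal.ofReal_le_ofReal_iff (by positivity)] at hpow
  rw [one_div 4, Real.le_rpow_inv_iff_of_pos (norm_nonneg _) (by positivity) four_pos]
  exact_mod_cast hpow

end WeightedSequence

/-- The key `L^∞` estimate: if `η : ℝ → ℓ²(ℕ, ℝ)` is differentiable with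
`∫ ‖η'‖² ≤ 1`, `∫ ∑ h(k) η(s)(k)² ≤ 1`, and `η(s)(k) = 0` for `k < n`, then
`‖η(s)‖ ≤ (3/h(n))^{1/4}` for every `s`. -/
theorem stmt18 (h : ℕ → ℝ) (hpos : ∀ k : ℕ, 0 < h k) (hmono : Monotone h) (n : ℕ)
    (η : ℝ → lp (fun _ : ℕ => ℝ) 2) (hη : Differentiable ℝ η)
    (h1 : (∫⁻ s : ℝ, ENNReal.ofReal (‖deriv η s‖ ^ 2)) ≤ 1)
    (h2 : (∫⁻ s : ℝ, ∑' k : ℕ, ENNReal.ofReal (h k * ((η s : ∀ _ : ℕ, ℝ) k) ^ 2)) ≤ 1)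
    (h3 : ∀ s : ℝ, ∀ k : ℕ, k < n → (η s : ∀ _ : ℕ, ℝ) k = 0) :
    ∀ s : ℝ, ‖η s‖ ≤ (3 / h n) ^ ((1:ℝ)/4) := by
  have hn := hpos n
  intro s
  calc ‖η s‖ ≤ (1 / h n) ^ ((1 : ℝ) / 4) :=
        stmt18_general hn hη h1 (by simpa only [Real.norm_eq_abs, sq_abs] using h2)
          (fun s k hk ↦ hmono (not_lt.1 fun hkn ↦ hk (h3 s k hkn))) s
    _ ≤ (3 / h n) ^ ((1 : ℝ) / 4) := by gcongr; norm_num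
end

section
/- Let m ∈ ℕ, let λ : ℝ^m → ℝ^m be a smooth map (the coefficients λ_i of a 1-form), and let u, ξ : ℝ → ℝ^m be smooth 1-periodic maps. Then the derivative at r = 0 of the function r ↦ ∫₀¹ ∑_i λ_i(u(t) + r·ξ(t)) · (u̇_i(t) + r·ξ̇_i(t)) dt equals ∫₀¹ ∑_{i,j} (∂_j λ_i(u(t)) − ∂_i λ_j(u(t))) · ξ_j(t) · u̇_i(t) dt. -/
/-!
Differentiating `∫ ω(u + rξ)(u̇ + rξ̇)` under the integral sign at `r = 0` gives the integrand
`(D_ξ ω)(u̇) + ω(ξ̇)` along `u`. It differs from `dω(ξ, u̇) = (D_ξ ω)(u̇) - (D_u̇ ω)(ξ)` by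
`(D_u̇ ω)(ξ) + ω(ξ̇)`, the time derivative of `ω(u)(ξ)`, which integrates to a boundary term. For
periodic `u` and `ξ` the two ends of the period cancel.
-/

open MeasureTheory Set

open scoped Interval

section ParametricIntegral

variable {𝕜 G : Type*} [RCLike 𝕜] [NormedAddCommGroup G] [NormedSpace ℝ G] [NormedSpace 𝕜 G]

theorem hasDerivAt_intervalIntegral_of_continuous_deriv {μ : Measure ℝ} [IsLocallyFiniteMeasure μ]
    {f f' : 𝕜 → ℝ → G} (hf : ∀ x, Continuous (f x))
    (hderiv : ∀ x t, HasDerivAt (f · t) (f' x t) x) (hf' : Continuous (Function.uncurry f'))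
    (a b : ℝ) (x₀ : 𝕜) :
    HasDerivAt (fun x ↦ ∫ t in a..b, f x t ∂μ) (∫ t in a..b, f' x₀ t ∂μ) x₀ := by
  obtain ⟨C, hC⟩ := ((isCompact_closedBall x₀ 1).prod
    (isCompact_uIcc (a := a) (b := b))).exists_bound_of_continuousOn hf'.continuousOn
  have hbound : ∀ t ∈ Ι a b, ∀ x ∈ Metric.closedBall x₀ 1, ‖f' x t‖ ≤ C :=
    fun t ht x hx ↦ hC (x, t) ⟨hx, uIoc_subset_uIcc ht⟩
  exact (intervalIntegral.hasDerivAt_integral_of_dominated_loc_of_deriv_le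
    (Metric.closedBall_mem_nhds x₀ one_pos)
    (.of_forall fun x ↦ (hf x).aestronglyMeasurable)
    ((hf x₀).intervalIntegrable a b)
    (hf'.uncurry_left x₀).aestronglyMeasurable
    (.of_forall hbound)
    intervalIntegrable_const
    (.of_forall fun t _ x _ ↦ hderiv x t)).2

end ParametricIntegral

section FirstVariation

variable {E F : Type*} [NormedAddCommGroup E] [NormedSpace ℝ E] [NormedAddCommGroup F]
  [NormedSpace ℝ F] {ω : E → E →L[ℝ] F}

/-- The exterior derivative `dω` of a 1-form `ω`, as a bilinear map:
`dω(v, w) = (D_v ω)(w) - (D_w ω)(v)`. As for `curveIntegral`, a 1-form is a map `E → E →L[ℝ] F`;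
`extDeriv` is the counterpart for forms valued in alternating maps. -/
noncomputable def oneFormExtDeriv (ω : E → E →L[ℝ] F) (x : E) : E →L[ℝ] E →L[ℝ] F :=
  fderiv ℝ ω x - (fderiv ℝ ω x).flip

/-- The action functional `u ↦ ∫ u*ω` of a 1-form `ω` on curves `u` over the time interval from
`a` to `b`. Curves are defined on all of `ℝ`, so that a loop is a periodic curve. -/
noncomputable def oneFormAction (ω : E → E →L[ℝ] F) (a b : ℝ) (u : ℝ → E) : F :=
  ∫ t in a..b, ω (u t) (deriv u t)

theorem oneFormExtDeriv_apply (ω : E → E →L[ℝ] F) (x v w : E) :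
    oneFormExtDeriv ω x v w = fderiv ℝ ω x v w - fderiv ℝ ω x w v :=
  rfl

theorem oneFormAction_add_smul {u ξ : ℝ → E} (hu : Differentiable ℝ u) (hξ : Differentiable ℝ ξ)
    (ω : E → E →L[ℝ] F) (a b r : ℝ) :
    oneFormAction ω a b (u + r • ξ) =
      ∫ t in a..b, ω (u t + r • ξ t) (deriv u t + r • deriv ξ t) := by
  have hderiv (t : ℝ) : deriv (u + r • ξ) t = deriv u t + r • deriv ξ t :=
    ((hu t).hasDerivAt.add ((hξ t).hasDerivAt.const_smul r)).deriv
  simp only [oneFormAction, hderiv, Pi.add_apply, Pi.smul_apply]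

theorem hasDerivAt_oneForm_apply {u v : ℝ → E} {u' v' : E} {t : ℝ}
    (hω : DifferentiableAt ℝ ω (u t)) (hu : HasDerivAt u u' t) (hv : HasDerivAt v v' t) :
    HasDerivAt (fun s ↦ ω (u s) (v s)) (fderiv ℝ ω (u t) u' (v t) + ω (u t) v') t :=
  (hω.hasFDerivAt.comp_hasDerivAt t hu).clm_apply hv

theorem continuous_fderiv_oneForm_apply {X : Type*} [TopologicalSpace X] (hω : ContDiff ℝ 1 ω)
    {x v w : X → E} (hx : Continuous x) (hv : Continuous v) (hw : Continuous w) :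
    Continuous fun s ↦ fderiv ℝ ω (x s) (v s) (w s) :=
  (((hω.continuous_fderiv one_ne_zero).comp hx).clm_apply hv).clm_apply hw

theorem hasDerivAt_oneFormAction_add_smul (hω : ContDiff ℝ 1 ω) {u ξ : ℝ → E}
    (hu : ContDiff ℝ 1 u) (hξ : ContDiff ℝ 1 ξ) (a b : ℝ) :
    HasDerivAt (fun r : ℝ ↦ oneFormAction ω a b (u + r • ξ))
      (∫ t in a..b, (fderiv ℝ ω (u t) (ξ t) (deriv u t) + ω (u t) (deriv ξ t))) 0 := by
  have hu' : Continuous (deriv u) := hu.continuous_deriv le_rfl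
  have hξ' : Continuous (deriv ξ) := hξ.continuous_deriv le_rfl
  have hline (x v : E) (r : ℝ) : HasDerivAt (fun s : ℝ ↦ x + s • v) v r := by
    simpa using ((hasDerivAt_id r).smul_const v).const_add x
  have hderiv (r t : ℝ) :
      HasDerivAt (fun s : ℝ ↦ ω (u t + s • ξ t) (deriv u t + s • deriv ξ t))
        (fderiv ℝ ω (u t + r • ξ t) (ξ t) (deriv u t + r • deriv ξ t)
          + ω (u t + r • ξ t) (deriv ξ t)) r :=
    hasDerivAt_oneForm_apply (hω.differentiable one_ne_zero _) (hline _ _ r) (hline _ _ r)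
  have hcont (r : ℝ) : Continuous fun t ↦ ω (u t + r • ξ t) (deriv u t + r • deriv ξ t) :=
    (hω.continuous.comp (hu.continuous.add (hξ.continuous.const_smul r))).clm_apply
      (hu'.add (hξ'.const_smul r))
  have hpos : Continuous fun p : ℝ × ℝ ↦ u p.2 + p.1 • ξ p.2 := by fun_prop
  have hvel : Continuous fun p : ℝ × ℝ ↦ deriv u p.2 + p.1 • deriv ξ p.2 :=
    (hu'.comp continuous_snd).add (continuous_fst.smul (hξ'.comp continuous_snd))
  have hcont_deriv : Continuous fun p : ℝ × ℝ ↦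
      fderiv ℝ ω (u p.2 + p.1 • ξ p.2) (ξ p.2) (deriv u p.2 + p.1 • deriv ξ p.2)
        + ω (u p.2 + p.1 • ξ p.2) (deriv ξ p.2) :=
    (continuous_fderiv_oneForm_apply hω hpos (hξ.continuous.comp continuous_snd) hvel).add
      ((hω.continuous.comp hpos).clm_apply (hξ'.comp continuous_snd))
  simp only [oneFormAction_add_smul (hu.differentiable one_ne_zero) (hξ.differentiable one_ne_zero)]
  simpa only [zero_smul, add_zero] using
    hasDerivAt_intervalIntegral_of_continuous_deriv (μ := volume) hcont hderiv hcont_deriv a b 0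

theorem integral_fderiv_add_eq_boundary_add_integral_oneFormExtDeriv [CompleteSpace F]
    (hω : ContDiff ℝ 1 ω) {u ξ : ℝ → E} (hu : ContDiff ℝ 1 u) (hξ : ContDiff ℝ 1 ξ) (a b : ℝ) :
    ∫ t in a..b, (fderiv ℝ ω (u t) (ξ t) (deriv u t) + ω (u t) (deriv ξ t)) =
      ω (u b) (ξ b) - ω (u a) (ξ a) +
        ∫ t in a..b, oneFormExtDeriv ω (u t) (ξ t) (deriv u t) := by
  have hu' : Continuous (deriv u) := hu.continuous_deriv le_rfl
  have hξ' : Continuous (deriv ξ) := hξ.continuous_deriv le_rfl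
  have hderiv (t : ℝ) : HasDerivAt (fun s ↦ ω (u s) (ξ s))
      (fderiv ℝ ω (u t) (deriv u t) (ξ t) + ω (u t) (deriv ξ t)) t :=
    hasDerivAt_oneForm_apply (hω.differentiable one_ne_zero _)
      (hu.differentiable one_ne_zero t).hasDerivAt (hξ.differentiable one_ne_zero t).hasDerivAt
  have hderiv_int : IntervalIntegrable
      (fun t ↦ fderiv ℝ ω (u t) (deriv u t) (ξ t) + ω (u t) (deriv ξ t)) volume a b :=
    ((continuous_fderiv_oneForm_apply hω hu.continuous hu' hξ.continuous).add
      ((hω.continuous.comp hu.continuous).clm_apply hξ')).intervalIntegrable a b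
  have hext_int : IntervalIntegrable
      (fun t ↦ oneFormExtDeriv ω (u t) (ξ t) (deriv u t)) volume a b :=
    ((continuous_fderiv_oneForm_apply hω hu.continuous hξ.continuous hu').sub
      (continuous_fderiv_oneForm_apply hω hu.continuous hu' hξ.continuous)).intervalIntegrable a b
  rw [← intervalIntegral.integral_eq_sub_of_hasDerivAt (fun t _ ↦ hderiv t) hderiv_int,
    ← intervalIntegral.integral_add hderiv_int hext_int]
  congr! 2 with t
  rw [oneFormExtDeriv_apply]
  abel

theorem stmt19_general [CompleteSpace F] (hω : ContDiff ℝ 1 ω) {u ξ : ℝ → E}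
    (hu : ContDiff ℝ 1 u) (hξ : ContDiff ℝ 1 ξ) (a b : ℝ) :
    HasDerivAt (fun r : ℝ ↦ oneFormAction ω a b (u + r • ξ))
      (ω (u b) (ξ b) - ω (u a) (ξ a) +
        ∫ t in a..b, oneFormExtDeriv ω (u t) (ξ t) (deriv u t)) 0 :=
  (hasDerivAt_oneFormAction_add_smul hω hu hξ a b).congr_deriv
    (integral_fderiv_add_eq_boundary_add_integral_oneFormExtDeriv hω hu hξ a b)

end FirstVariation

section Coordinates

variable {ι : Type*} [Fintype ι] {c : (ι → ℝ) → ι → ℝ}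

/-- The 1-form `∑ᵢ cᵢ dxᵢ` on `ℝ^ι`, which turns a vector of coefficients into an argument of
`oneFormAction` and `oneFormExtDeriv`. -/
noncomputable def coordOneForm (c : (ι → ℝ) → ι → ℝ) (x : ι → ℝ) : (ι → ℝ) →L[ℝ] ℝ :=
  ∑ i, c x i • ContinuousLinearMap.proj i

theorem coordOneForm_apply (c : (ι → ℝ) → ι → ℝ) (x v : ι → ℝ) :
    coordOneForm c x v = ∑ i, c x i * v i := by
  simp [coordOneForm]

theorem contDiff_coordOneForm {n : WithTop ℕ∞} (hc : ContDiff ℝ n c) :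
    ContDiff ℝ n (coordOneForm c) :=
  ContDiff.sum fun i _ ↦ (contDiff_pi.1 hc i).smul contDiff_const

theorem fderiv_coordOneForm_apply {x : ι → ℝ} (hc : DifferentiableAt ℝ c x) (v w : ι → ℝ) :
    fderiv ℝ (coordOneForm c) x v w = ∑ i, fderiv ℝ (fun y ↦ c y i) x v * w i := by
  have h : HasFDerivAt (coordOneForm c) (∑ i, (fderiv ℝ (fun y ↦ c y i) x).smulRight
      (ContinuousLinearMap.proj i : (ι → ℝ) →L[ℝ] ℝ)) x :=
    .fun_sum fun i _ ↦ (differentiableAt_pi.1 hc i).hasFDerivAt.smul_const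
      (ContinuousLinearMap.proj i : (ι → ℝ) →L[ℝ] ℝ)
  simp [h.fderiv]

variable [DecidableEq ι]

theorem oneFormExtDeriv_coordOneForm_apply {x : ι → ℝ} (hc : DifferentiableAt ℝ c x)
    (v w : ι → ℝ) :
    oneFormExtDeriv (coordOneForm c) x v w =
      ∑ i, ∑ j, (fderiv ℝ (fun y ↦ c y i) x (Pi.single j 1) -
        fderiv ℝ (fun y ↦ c y j) x (Pi.single i 1)) * v j * w i := by
  have hexpand (i : ι) (z : ι → ℝ) :
      fderiv ℝ (fun y ↦ c y i) x z = ∑ j, fderiv ℝ (fun y ↦ c y i) x (Pi.single j 1) * z j := by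
    conv_lhs => rw [pi_eq_sum_univ' z]
    simp [Pi.single, mul_comm]
  rw [oneFormExtDeriv_apply, fderiv_coordOneForm_apply hc, fderiv_coordOneForm_apply hc]
  simp only [hexpand _ v, hexpand _ w, Finset.sum_mul, sub_mul, Finset.sum_sub_distrib]
  congr 1
  rw [Finset.sum_comm]
  congr! 2
  ring

end Coordinates

/-- First variation of the action functional: the derivative at `r = 0` of
`r ↦ ∫₀¹ ∑ᵢ λᵢ(u(t) + r ξ(t)) (u̇ᵢ(t) + r ξ̇ᵢ(t)) dt` equals
`∫₀¹ ∑ᵢⱼ (∂ⱼλᵢ(u(t)) − ∂ᵢλⱼ(u(t))) ξⱼ(t) u̇ᵢ(t) dt`. -/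
theorem stmt19 (m : ℕ) (lam : (Fin m → ℝ) → (Fin m → ℝ)) (hlam : ContDiff ℝ (⊤ : ℕ∞) lam)
    (u ξ : ℝ → (Fin m → ℝ)) (hu : ContDiff ℝ (⊤ : ℕ∞) u) (hξ : ContDiff ℝ (⊤ : ℕ∞) ξ)
    (hup : ∀ t : ℝ, u (t + 1) = u t) (hξp : ∀ t : ℝ, ξ (t + 1) = ξ t) :
    HasDerivAt
      (fun r : ℝ =>
        ∫ t in (0:ℝ)..1, ∑ i : Fin m,
          lam (u t + r • ξ t) i * (deriv u t i + r * deriv ξ t i))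
      (∫ t in (0:ℝ)..1, ∑ i : Fin m, ∑ j : Fin m,
        ((fderiv ℝ (fun y => lam y i) (u t)) (Pi.single j 1) -
          (fderiv ℝ (fun y => lam y j) (u t)) (Pi.single i 1)) * ξ t j * deriv u t i)
      0 := by
  have hend : u 1 = u 0 ∧ ξ 1 = ξ 0 := ⟨by simpa using hup 0, by simpa using hξp 0⟩
  have hle : (1 : WithTop ℕ∞) ≤ (⊤ : ℕ∞) := by simp
  have hvar := stmt19_general (contDiff_coordOneForm (hlam.of_le hle)) (hu.of_le hle)
    (hξ.of_le hle) 0 1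
  simpa [oneFormAction_add_smul (hu.differentiable (by simp)) (hξ.differentiable (by simp)),
    coordOneForm_apply, oneFormExtDeriv_coordOneForm_apply (hlam.differentiable (by simp) _), hend]
    using hvar
end
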